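/- Let 0 ≤ α < 1/4, let N be a positive integer, and let x̃_{−N},…,x̃_N be a set of α-perturbed nodes, with w̃_{−N},…,w̃_N the unique quadrature weights exact on T_N at these nodes. Then Σ_{j=−N}^{N} |w̃_j| ≤ 2π/(cos(πα) − sin(πα)). -/

import Mathlib

open Real Finset

/-- `q` is a trigonometric polynomial of degree ≤ N. -/
def IsTrigPoly (N : ℕ) (q : ℝ → ℂ) : Prop :=
  ∃ c : ℤ → ℂ, ∀ x : ℝ,
    q x = ∑ k ∈ Finset.Icc (-(N:ℤ)) (N:ℤ), c k * Complex.exp (Complex.I * (k : ℂ) * (x : ℂ))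

/-- `x` is a set of α-perturbed nodes of size 2N+1. -/
def PerturbedNodes (N : ℕ) (α : ℝ) (x : ℤ → ℝ) : Prop :=
  ∀ j ∈ Finset.Icc (-(N:ℤ)) (N:ℤ),
    |x j - (j : ℝ) * (2*π/(2*N+1))| ≤ α * (2*π/(2*N+1))

/-- The weights `w` form a quadrature rule at the nodes `x` that is exact on `T_N`. -/
def ExactQuad (N : ℕ) (x : ℤ → ℝ) (w : ℤ → ℝ) : Prop :=
  ∀ q : ℝ → ℂ, IsTrigPoly N q →
    ∑ j ∈ Finset.Icc (-(N:ℤ)) (N:ℤ), (w j : ℂ) * q (x j) = ∫ t in (-π)..π, q t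

/-!
Kadec's `1/4` argument. Let `F` be the matrix of Fourier modes at the equispaced nodes and `F'` the
one at the perturbed nodes `(j + δ_j) h`. Since `F / √(2N+1)` is unitary, the point is to bound
`F - F'`, whose entries are those of `F` multiplied by `1 - exp (i δ_j t_k)` with `t_k = k h`.
Expand `1 - cos (δ t)` in the modes `exp (i n t)` and `i sin (δ t)` in the modes
`exp (i (n - 1/2) t)`: each term is a product of a function of `t` and a function of `δ`, hence
acts on `F` by diagonal matrices on both sides, and its size is the absolute value of a Fourier
coefficient. For `|δ| ≤ α ≤ 1/4` these coefficients are dominated by those at `δ = α`, which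
alternate in sign, so at `t = π` they add up to exactly `1 - cos (π α)` and `sin (π α)`. Hence
`‖F' u‖ ≥ (cos (π α) - sin (π α)) √(2N+1) ‖u‖` in `ℓ²`. Exactness on the Fourier modes says that
`F' w` is `2π` times a basis vector, and Cauchy-Schwarz passes from `ℓ²` to `ℓ¹`.
-/

section SchurMultiplier

open Matrix
open scoped Matrix.Norms.L2Operator

variable {𝕜 m n β : Type*} [RCLike 𝕜] [Fintype m] [Fintype n] [DecidableEq n]

theorem diagonal_mul_mul_diagonal_eq_hadamard {R : Type*} [CommSemiring R] [DecidableEq m]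
    (F : Matrix m n R) (f : m → R) (g : n → R) :
    diagonal f * F * diagonal g = F ⊙ vecMulVec f g := by
  ext i j
  simp only [mul_diagonal, diagonal_mul, hadamard_apply, vecMulVec_apply]
  ring

theorem l2_opNorm_hadamard_le {F H : Matrix m n 𝕜} {f : β → m → 𝕜} {g : β → n → 𝕜} {A : β → ℝ}
    {C : ℝ} (hH : ∀ i j, HasSum (fun b => f b i * g b j) (H i j)) (hf : ∀ b, ‖f b‖ ≤ 1)
    (hg : ∀ b, ‖g b‖ ≤ A b) (hA : HasSum A C) : ‖F ⊙ H‖ ≤ C * ‖F‖ := by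
  classical
  have hsum : HasSum (fun b => F ⊙ vecMulVec (f b) (g b)) (F ⊙ H) :=
    Pi.hasSum.2 fun i => Pi.hasSum.2 fun j => (hH i j).mul_left (F i j)
  refine hsum.norm_le_of_bounded (hA.mul_right ‖F‖) fun b => ?_
  calc ‖F ⊙ vecMulVec (f b) (g b)‖
      = ‖diagonal (f b) * F * diagonal (g b)‖ := by rw [diagonal_mul_mul_diagonal_eq_hadamard]
    _ ≤ ‖diagonal (f b)‖ * ‖F‖ * ‖diagonal (g b)‖ :=
        (l2_opNorm_mul _ _).trans (by gcongr; exact l2_opNorm_mul _ _)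
    _ ≤ 1 * ‖F‖ * A b := by
        rw [l2_opNorm_diagonal, l2_opNorm_diagonal]
        gcongr
        exacts [hf b, hg b]
    _ = A b * ‖F‖ := by ring

theorem l2_opNorm_of_conjTranspose_mul_self [Nonempty n] {F : Matrix m n 𝕜} {c : ℝ}
    (hc : 0 ≤ c) (hF : Fᴴ * F = (c : 𝕜) • 1) : ‖F‖ = √c := by
  rw [← sqrt_mul_self (norm_nonneg F), ← l2_opNorm_conjTranspose_mul_self, hF, norm_smul,
    CStarRing.norm_one, mul_one, RCLike.norm_of_nonneg hc]

theorem sum_norm_le_sqrt_card_mul_norm_toLp {ι E : Type*} [Fintype ι] [SeminormedAddCommGroup E]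
    (v : ι → E) : ∑ i, ‖v i‖ ≤ √(Fintype.card ι) * ‖WithLp.toLp 2 v‖ := by
  rw [PiLp.norm_eq_of_L2, ← sqrt_mul (Nat.cast_nonneg _)]
  exact le_sqrt_of_sq_le sq_sum_le_card_mul_sum_sq

theorem norm_toLp_eq_sqrt_re_dotProduct_star {ι : Type*} [Fintype ι] (v : ι → 𝕜) :
    ‖WithLp.toLp 2 v‖ = √(RCLike.re (v ⬝ᵥ star v)) := by
  rw [norm_eq_sqrt_re_inner (𝕜 := 𝕜), EuclideanSpace.inner_toLp_toLp]

theorem norm_toLp_mulVec_of_conjTranspose_mul_self {F : Matrix m n 𝕜} {c : ℝ}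
    (hc : 0 ≤ c) (hF : Fᴴ * F = (c : 𝕜) • 1) (u : n → 𝕜) :
    ‖WithLp.toLp 2 (F *ᵥ u)‖ = √c * ‖WithLp.toLp 2 u‖ := by
  have hinner : (F *ᵥ u) ⬝ᵥ star (F *ᵥ u) = c * (u ⬝ᵥ star u) := by
    rw [dotProduct_comm, star_mulVec, ← dotProduct_mulVec, mulVec_mulVec, hF, smul_mulVec,
      one_mulVec, dotProduct_smul, smul_eq_mul, dotProduct_comm]
  simp only [norm_toLp_eq_sqrt_re_dotProduct_star, hinner, RCLike.re_ofReal_mul, sqrt_mul hc]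

end SchurMultiplier

theorem sum_zpow_Icc_neg_eq_zero {K : Type*} [Field K] {ζ : K} {N : ℕ} (h1 : ζ ≠ 1)
    (hζ : ζ ^ (2 * N + 1) = 1) :
    ∑ k ∈ Icc (-(N : ℤ)) (N : ℤ), ζ ^ k = 0 := by
  have h0 : ζ ≠ 0 := by
    rintro rfl
    simp at hζ
  have hcard : ((N : ℤ) + 1 - -(N : ℤ)).toNat = 2 * N + 1 := by lia
  calc ∑ k ∈ Icc (-(N : ℤ)) (N : ℤ), ζ ^ k
      = ∑ i ∈ range (2 * N + 1), ζ ^ (-(N : ℤ) + i) := by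
        rw [Int.Icc_eq_finset_map, sum_map, hcard]
        rfl
    _ = ζ ^ (-(N : ℤ)) * ∑ i ∈ range (2 * N + 1), ζ ^ i := by
        simp only [mul_sum, zpow_add₀ h0, zpow_natCast]
    _ = 0 := by rw [geom_sum_eq h1, hζ, sub_self, zero_div, mul_zero]

theorem antitoneOn_sinc : AntitoneOn sinc (Set.Icc 0 π) := by
  intro x hx y hy hxy
  rcases hx.1.eq_or_lt with rfl | hx0
  · simpa using sinc_le_one y
  have hy0 : 0 < y := hx0.trans_le hxy
  rw [sinc_eq_dslope, dslope_of_ne _ hx0.ne', dslope_of_ne _ hy0.ne']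
  exact strictConcaveOn_sin_Icc.concaveOn.antitoneOn_slope_gt ⟨le_rfl, pi_pos.le⟩
    ⟨hx, hx0⟩ ⟨hy, hy0⟩ hxy

theorem monotoneOn_mul_cos : MonotoneOn (fun x => x * cos x) (Set.Icc 0 (π / 4)) := by
  refine monotoneOn_of_deriv_nonneg (convex_Icc _ _) (by fun_prop) (by fun_prop) fun x hx => ?_
  rw [interior_Icc] at hx
  have hderiv : HasDerivAt (fun x => x * cos x) (1 * cos x + x * -sin x) x :=
    (hasDerivAt_id x).mul (hasDerivAt_cos x)
  have hsin0 : 0 ≤ sin x := sin_nonneg_of_nonneg_of_le_pi hx.1.le (by linarith [hx.2, pi_pos])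
  have hx1 : x ≤ 1 := by linarith [hx.2, pi_lt_four]
  have hsin_le_cos : sin x ≤ cos x := by
    rw [← cos_pi_div_two_sub]
    exact cos_le_cos_of_nonneg_of_le_pi hx.1.le (by linarith [hx.1, pi_pos]) (by linarith [hx.2])
  rw [hderiv.deriv]
  linarith [mul_le_of_le_one_left hsin0 hx1]

theorem summable_inv_sq_sub_sq (s δ : ℝ) :
    Summable fun n : ℤ => (((n : ℝ) - s) ^ 2 - δ ^ 2)⁻¹ := by
  rw [← Complex.summable_ofReal]
  refine EisensteinSeries.summable_inv_of_isBigO_rpow_inv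
    (f := fun n : ℤ => ((((n : ℝ) - s) ^ 2 - δ ^ 2 : ℝ) : ℂ)) one_lt_two ?_ |>.congr ?_
  · refine ((EisensteinSeries.linear_inv_isBigO_right 1 (-(s + δ : ℂ))).mul
      (EisensteinSeries.linear_inv_isBigO_right 1 (δ - s : ℂ))).congr (fun n => ?_) fun n => ?_
    · rw [← mul_inv]
      push_cast
      ring
    · rw [← mul_inv, rpow_two, sq_abs, sq]
  · intro n
    rw [Complex.ofReal_inv]

section FourierSeries

variable {a b : ℝ}

theorem hasSum_fourierCoeffOn_of_summable (hab : a < b) {f : ℝ → ℂ}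
    (hf : ContinuousOn f (Set.Icc a b)) (hper : f a = f b)
    (hs : Summable (fourierCoeffOn hab f)) {t : ℝ} (ht : t ∈ Set.Icc a b) :
    HasSum (fun n => fourierCoeffOn hab f n * fourier n (t : AddCircle (b - a))) (f t) := by
  have : Fact (0 < b - a) := ⟨sub_pos.2 hab⟩
  have hend : a + (b - a) = b := add_sub_cancel a b
  let F : C(AddCircle (b - a), ℂ) := ⟨AddCircle.liftIoc (b - a) a f,
    AddCircle.liftIoc_continuous (by rwa [hend]) (by rwa [hend])⟩
  have hF : ∀ s ∈ Set.Ioc a b, F s = f s := fun s hs =>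
    AddCircle.liftIoc_coe_apply (by rwa [hend])
  have hFt : F t = f t := by
    rcases ht.1.eq_or_lt with rfl | hat
    · rw [hper, ← hF b ⟨hab, le_rfl⟩, ← AddCircle.coe_add_period (b - a) a, hend]
    · exact hF t ⟨hat, ht.2⟩
  rw [← hFt]
  exact has_pointwise_sum_fourier_series_of_summable (f := F) hs t

theorem fourierCoeffOn_add (hab : a < b) {f g : ℝ → ℂ}
    (hf : IntervalIntegrable f MeasureTheory.volume a b)
    (hg : IntervalIntegrable g MeasureTheory.volume a b) (n : ℤ) :
    fourierCoeffOn hab (fun t => f t + g t) n =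
      fourierCoeffOn hab f n + fourierCoeffOn hab g n := by
  have hfourier : Continuous fun t : ℝ => fourier (-n) (t : AddCircle (b - a)) := by fun_prop
  simp only [fourierCoeffOn_eq_integral, smul_eq_mul, mul_add]
  rw [intervalIntegral.integral_add (hf.continuousOn_mul hfourier.continuousOn)
    (hg.continuousOn_mul hfourier.continuousOn), smul_add]

end FourierSeries

theorem neg_pi_lt_pi : -π < π := neg_lt_self pi_pos

theorem fourier_neg_pi_pi_coe (n : ℤ) (t : ℝ) :
    fourier n (t : AddCircle (π - -π)) = Complex.exp (Complex.I * n * t) := by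
  rw [fourier_coe_apply]
  congr 1
  push_cast
  field_simp
  ring

theorem integral_exp_I_mul (ν : ℝ) :
    ∫ t in (-π)..π, Complex.exp (Complex.I * ν * t) = 2 * π * sinc (π * ν) := by
  rcases eq_or_ne ν 0 with rfl | hν
  · simp only [Complex.ofReal_zero, mul_zero, zero_mul, Complex.exp_zero, sinc_zero,
      Complex.ofReal_one, mul_one, intervalIntegral.integral_const, Complex.real_smul]
    push_cast
    ring
  · have hscale := intervalIntegral.integral_comp_mul_left (a := -π) (b := π)
      (fun t : ℝ => Complex.exp (t * Complex.I)) hν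
    rw [mul_neg, mul_comm ν π, integral_exp_mul_I_eq_sinc, Complex.real_smul] at hscale
    convert hscale using 1
    · congr! 3 with t
      push_cast
      ring
    · push_cast
      have : (ν : ℂ) ≠ 0 := by exact_mod_cast hν
      field

theorem fourierCoeffOn_exp_I_mul (ν : ℝ) (n : ℤ) :
    fourierCoeffOn neg_pi_lt_pi (fun t : ℝ => Complex.exp (Complex.I * ν * t)) n =
      sinc (π * (ν - n)) := by
  have hmode (t : ℝ) : fourier (-n) (t : AddCircle (π - -π)) * Complex.exp (Complex.I * ν * t) =
      Complex.exp (Complex.I * (ν - n : ℝ) * t) := by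
    rw [fourier_neg_pi_pi_coe, ← Complex.exp_add]
    push_cast
    ring_nf
  simp only [fourierCoeffOn_eq_integral, smul_eq_mul, hmode, integral_exp_I_mul, Complex.real_smul]
  have := pi_ne_zero
  push_cast
  field_simp
  ring

/-- The `n`-th Fourier coefficient of `t ↦ cos (δ t)` on `[-π, π]`, written with `sinc` so that the
resonant values `δ = ±n` are covered. -/
noncomputable def cosCoeff (δ : ℝ) (n : ℤ) : ℝ :=
  (sinc (π * (δ - n)) + sinc (π * (δ + n))) / 2

/-- The coefficient of `exp (i (n - 1/2) t)` in the expansion of `t ↦ i sin (δ t)` on `[-π, π]`.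
Half-integer frequencies are used because they are antiperiodic: like `sin (δ t)`, they change sign
between `-π` and `π`, so the expansion converges absolutely up to the endpoints. -/
noncomputable def sinCoeff (δ : ℝ) (n : ℤ) : ℝ :=
  (sinc (π * (δ - (n - 1 / 2))) - sinc (π * (δ + (n - 1 / 2)))) / 2

theorem fourierCoeffOn_cos (δ : ℝ) (n : ℤ) :
    fourierCoeffOn neg_pi_lt_pi (fun t : ℝ => (cos (δ * t) : ℂ)) n = cosCoeff δ n := by
  have heuler : (fun t : ℝ => (cos (δ * t) : ℂ)) = fun t : ℝ => 1 / 2 *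
      (Complex.exp (Complex.I * δ * t) + Complex.exp (Complex.I * (-δ : ℝ) * t)) := by
    ext t
    push_cast
    rw [Complex.cos]
    ring_nf
  have hsinc : sinc (π * (-δ - n)) = sinc (π * (δ + n)) := by rw [← sinc_neg]; ring_nf
  rw [heuler, fourierCoeffOn.const_mul, fourierCoeffOn_add, fourierCoeffOn_exp_I_mul,
    fourierCoeffOn_exp_I_mul, hsinc, cosCoeff]
  · push_cast
    ring
  all_goals exact Continuous.intervalIntegrable (by fun_prop) _ _

theorem fourierCoeffOn_exp_mul_sin (δ : ℝ) (n : ℤ) :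
    fourierCoeffOn neg_pi_lt_pi
      (fun t : ℝ => Complex.exp (Complex.I * (1 / 2) * t) * (Complex.I * sin (δ * t))) n =
      sinCoeff δ n := by
  have heuler : (fun t : ℝ => Complex.exp (Complex.I * (1 / 2) * t) * (Complex.I * sin (δ * t))) =
      fun t : ℝ => 1 / 2 * Complex.exp (Complex.I * (δ + 1 / 2 : ℝ) * t) +
        -1 / 2 * Complex.exp (Complex.I * (-δ + 1 / 2 : ℝ) * t) := by
    ext t
    push_cast
    simp only [Complex.sin, mul_add, add_mul, Complex.exp_add]
    ring_nf
    simp only [Complex.I_sq]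
    ring
  have hsinc : sinc (π * (-δ + 1 / 2 - n)) = sinc (π * (δ + (n - 1 / 2))) := by
    rw [← sinc_neg]; ring_nf
  rw [heuler, fourierCoeffOn_add, fourierCoeffOn.const_mul, fourierCoeffOn.const_mul,
    fourierCoeffOn_exp_I_mul, fourierCoeffOn_exp_I_mul, hsinc, sinCoeff]
  · push_cast
    ring_nf
  all_goals exact Continuous.intervalIntegrable (by fun_prop) _ _

theorem cosCoeff_zero_right (δ : ℝ) : cosCoeff δ 0 = sinc (π * δ) := by
  simp only [cosCoeff, Int.cast_zero, sub_zero, add_zero, add_self_div_two]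

theorem cosCoeff_eq {δ : ℝ} {n : ℤ} (hδ : δ ^ 2 ≠ (n : ℝ) ^ 2) :
    cosCoeff δ n = -((-1) ^ n * (δ * sin (π * δ) / (π * ((n : ℝ) ^ 2 - δ ^ 2)))) := by
  have hsub : δ - n ≠ 0 := fun h => hδ (by rw [sub_eq_zero.1 h])
  have hadd : δ + n ≠ 0 := fun h => hδ (by rw [eq_neg_of_add_eq_zero_left h, neg_sq])
  have hsin_sub : sin (π * (δ - n)) = (-1) ^ n * sin (π * δ) := by
    rw [← sin_sub_int_mul_pi]
    ring_nf
  have hsin_add : sin (π * (δ + n)) = (-1) ^ n * sin (π * δ) := by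
    rw [← sin_add_int_mul_pi]
    ring_nf
  have hfactor : (n : ℝ) ^ 2 - δ ^ 2 = -((δ - n) * (δ + n)) := by ring
  rw [cosCoeff, sinc_of_ne_zero (mul_ne_zero pi_ne_zero hsub),
    sinc_of_ne_zero (mul_ne_zero pi_ne_zero hadd), hsin_sub, hsin_add, hfactor]
  have := pi_ne_zero
  field_simp
  ring

theorem sinCoeff_eq {δ : ℝ} {n : ℤ} (hδ : δ ^ 2 ≠ ((n : ℝ) - 1 / 2) ^ 2) :
    sinCoeff δ n =
      -((-1) ^ n * (δ * cos (π * δ) / (π * (((n : ℝ) - 1 / 2) ^ 2 - δ ^ 2)))) := by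
  have hsub : δ - (n - 1 / 2) ≠ 0 := fun h => hδ (by rw [sub_eq_zero.1 h])
  have hadd : δ + (n - 1 / 2) ≠ 0 := fun h => hδ (by rw [eq_neg_of_add_eq_zero_left h, neg_sq])
  have hsin_sub : sin (π * (δ - (n - 1 / 2))) = (-1) ^ n * cos (π * δ) := by
    rw [← sin_add_pi_div_two, ← sin_sub_int_mul_pi]
    ring_nf
  have hsin_add : sin (π * (δ + (n - 1 / 2))) = (-1) ^ n * -cos (π * δ) := by
    rw [← sin_sub_pi_div_two, ← sin_add_int_mul_pi]
    ring_nf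
  have hfactor : ((n : ℝ) - 1 / 2) ^ 2 - δ ^ 2 = -((δ - (n - 1 / 2)) * (δ + (n - 1 / 2))) := by
    ring
  rw [sinCoeff, sinc_of_ne_zero (mul_ne_zero pi_ne_zero hsub),
    sinc_of_ne_zero (mul_ne_zero pi_ne_zero hadd), hsin_sub, hsin_add, hfactor]
  have := pi_ne_zero
  generalize (n : ℝ) - 1 / 2 = ν at *
  field_simp
  ring

theorem summable_of_eq_alternating_div {c : ℤ → ℝ} {s δ C : ℝ}
    (hc : ∀ n : ℤ, δ ^ 2 ≠ ((n : ℝ) - s) ^ 2 →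
      c n = -((-1) ^ n * (C / (π * (((n : ℝ) - s) ^ 2 - δ ^ 2))))) :
    Summable c := by
  have hfinite : {n : ℤ | δ ^ 2 = ((n : ℝ) - s) ^ 2}.Finite := by
    refine ((Set.toFinite {s + δ, s - δ}).preimage Int.cast_injective.injOn).subset fun n hn => ?_
    rcases sq_eq_sq_iff_eq_or_eq_neg.1 (hn : δ ^ 2 = ((n : ℝ) - s) ^ 2) with h | h
    · exact Or.inl (by linarith)
    · exact Or.inr (show (n : ℝ) = s - δ by linarith)
  refine Summable.of_norm_bounded_eventually
    ((summable_inv_sq_sub_sq s δ).norm.mul_left (|C| / π)) ?_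
  filter_upwards [hfinite.compl_mem_cofinite] with n hn
  rw [hc n hn, norm_neg, norm_mul, norm_zpow, norm_neg, norm_one, one_zpow, one_mul, norm_div,
    norm_mul, norm_inv, norm_of_nonneg pi_pos.le, norm_eq_abs C]
  exact (by field_simp : _ = _).le

theorem summable_cosCoeff (δ : ℝ) : Summable (cosCoeff δ) :=
  summable_of_eq_alternating_div (s := 0) (δ := δ) (C := δ * sin (π * δ)) fun n hn => by
    rw [sub_zero] at hn ⊢
    exact cosCoeff_eq hn

theorem summable_sinCoeff (δ : ℝ) : Summable (sinCoeff δ) :=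
  summable_of_eq_alternating_div fun _ hn => sinCoeff_eq hn

theorem hasSum_cosCoeff (δ : ℝ) {t : ℝ} (ht : t ∈ Set.Icc (-π) π) :
    HasSum (fun n : ℤ => Complex.exp (Complex.I * n * t) * cosCoeff δ n) (cos (δ * t)) := by
  have hcoeff := funext (fourierCoeffOn_cos δ)
  have hseries := hasSum_fourierCoeffOn_of_summable neg_pi_lt_pi
    (f := fun t : ℝ => (cos (δ * t) : ℂ)) (by fun_prop) (by rw [mul_neg, cos_neg])
    (by rw [hcoeff]; exact Complex.summable_ofReal.2 (summable_cosCoeff δ)) ht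
  simpa only [fourierCoeffOn_cos, fourier_neg_pi_pi_coe, mul_comm (cosCoeff δ _ : ℂ)] using hseries

theorem hasSum_sinCoeff (δ : ℝ) {t : ℝ} (ht : t ∈ Set.Icc (-π) π) :
    HasSum (fun n : ℤ => Complex.exp (Complex.I * (n - 1 / 2 : ℝ) * t) * sinCoeff δ n)
      (Complex.I * sin (δ * t)) := by
  have hcoeff := funext (fourierCoeffOn_exp_mul_sin δ)
  have hper : Complex.exp (Complex.I * (1 / 2) * (-π : ℝ)) * (Complex.I * sin (δ * -π)) =
      Complex.exp (Complex.I * (1 / 2) * (π : ℝ)) * (Complex.I * sin (δ * π)) := by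
    have hneg : Complex.I * (1 / 2) * (-π : ℝ) = Complex.I * (1 / 2) * π - π * Complex.I := by
      push_cast
      ring
    rw [hneg, Complex.exp_sub_pi_mul_I, mul_neg δ, sin_neg]
    push_cast
    ring
  have hseries := (hasSum_fourierCoeffOn_of_summable neg_pi_lt_pi
    (f := fun t : ℝ => Complex.exp (Complex.I * (1 / 2) * t) * (Complex.I * sin (δ * t)))
    (by fun_prop) hper
    (by rw [hcoeff]; exact Complex.summable_ofReal.2 (summable_sinCoeff δ)) ht).mul_left
    (Complex.exp (-(Complex.I * (1 / 2) * t)))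
  rw [← mul_assoc, ← Complex.exp_add, neg_add_cancel, Complex.exp_zero, one_mul] at hseries
  refine hseries.congr_fun fun n => ?_
  rw [fourierCoeffOn_exp_mul_sin, fourier_neg_pi_pi_coe, mul_left_comm, ← Complex.exp_add, mul_comm]
  push_cast
  ring_nf

theorem exp_I_mul_int_mul_pi (n : ℤ) : Complex.exp (Complex.I * n * π) = (-1) ^ n := by
  rw [mul_right_comm, mul_comm Complex.I, mul_comm _ (n : ℂ), Complex.exp_int_mul,
    Complex.exp_pi_mul_I]

theorem exp_I_mul_int_sub_half_mul_pi (n : ℤ) :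
    Complex.exp (Complex.I * (n - 1 / 2 : ℝ) * π) = -Complex.I * (-1) ^ n := by
  have h : Complex.I * (n - 1 / 2 : ℝ) * π = Complex.I * n * π + -(π / 2 * Complex.I) := by
    push_cast
    ring
  rw [h, Complex.exp_add, exp_I_mul_int_mul_pi, Complex.exp_neg, Complex.exp_pi_div_two_mul_I,
    Complex.inv_I, mul_comm]

theorem hasSum_one_sub_cos (δ : ℝ) {t : ℝ} (ht : t ∈ Set.Icc (-π) π) :
    HasSum (fun n : ℤ => Complex.exp (Complex.I * n * t) * (cosCoeff 0 n - cosCoeff δ n : ℝ))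
      (1 - cos (δ * t)) := by
  have h := (hasSum_cosCoeff 0 ht).sub (hasSum_cosCoeff δ ht)
  rw [zero_mul, cos_zero, Complex.ofReal_one] at h
  simpa only [Complex.ofReal_sub, mul_sub] using h

theorem hasSum_alternating_one_sub_cos (α : ℝ) :
    HasSum (fun n : ℤ => (-1) ^ n * (cosCoeff 0 n - cosCoeff α n)) (1 - cos (π * α)) := by
  have h := hasSum_one_sub_cos α (t := π) ⟨neg_pi_lt_pi.le, le_rfl⟩
  simp only [exp_I_mul_int_mul_pi] at h
  rw [← Complex.hasSum_ofReal, mul_comm π α]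
  push_cast at h ⊢
  exact h

theorem hasSum_alternating_sinCoeff (α : ℝ) :
    HasSum (fun n : ℤ => -((-1) ^ n * sinCoeff α n)) (sin (π * α)) := by
  have h := (hasSum_sinCoeff α (t := π) ⟨neg_pi_lt_pi.le, le_rfl⟩).mul_left (-Complex.I)
  rw [← Complex.hasSum_ofReal, mul_comm π α]
  simp only [exp_I_mul_int_sub_half_mul_pi] at h
  rw [← mul_assoc, neg_mul, Complex.I_mul_I, neg_neg, one_mul] at h
  refine h.congr_fun fun n => ?_
  rw [← mul_assoc, ← mul_assoc, neg_mul_neg, Complex.I_mul_I]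
  push_cast
  ring

theorem abs_div_sq_sub_sq_le {c C δ α ν : ℝ} (hc : |c| ≤ C) (hδ : |δ| ≤ α) (hα : α ^ 2 < ν ^ 2) :
    |c / (π * (ν ^ 2 - δ ^ 2))| ≤ C / (π * (ν ^ 2 - α ^ 2)) := by
  have hsq : δ ^ 2 ≤ α ^ 2 := sq_le_sq.2 (hδ.trans (le_abs_self α))
  have hpi := pi_pos
  have hνα : 0 < ν ^ 2 - α ^ 2 := sub_pos.2 hα
  have hle : π * (ν ^ 2 - α ^ 2) ≤ π * (ν ^ 2 - δ ^ 2) := by gcongr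
  rw [abs_div, abs_of_pos ((mul_pos hpi hνα).trans_le hle)]
  exact div_le_div₀ ((abs_nonneg c).trans hc) hc (mul_pos hpi hνα) hle

theorem abs_mul_sin_pi_mul_le {δ α : ℝ} (hδ : |δ| ≤ α) (hα : α ≤ 1 / 2) :
    |δ * sin (π * δ)| ≤ α * sin (π * α) := by
  have hpi := pi_pos
  have hle_pi : π * |δ| ≤ π := by nlinarith
  have hmul : |π * δ| = π * |δ| := by rw [abs_mul, abs_of_pos hpi]
  have habs : |δ * sin (π * δ)| = |δ| * sin (π * |δ|) := by
    rw [abs_mul, abs_sin_eq_sin_abs_of_abs_le_pi (hmul.trans_le hle_pi), hmul]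
  have hmono : sin (π * |δ|) ≤ sin (π * α) := sin_le_sin_of_le_of_le_pi_div_two
    (by nlinarith [abs_nonneg δ]) (by nlinarith) (by gcongr)
  rw [habs]
  exact mul_le_mul hδ hmono (sin_nonneg_of_nonneg_of_le_pi (by positivity) hle_pi)
    ((abs_nonneg δ).trans hδ)

theorem abs_mul_cos_pi_mul_le {δ α : ℝ} (hδ : |δ| ≤ α) (hα : α ≤ 1 / 4) :
    |δ * cos (π * δ)| ≤ α * cos (π * α) := by
  have hpi := pi_pos
  have hcos : 0 ≤ cos (π * |δ|) :=
    cos_nonneg_of_neg_pi_div_two_le_of_le (by nlinarith [abs_nonneg δ]) (by nlinarith)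
  have habs : |δ * cos (π * δ)| = |δ| * cos (π * |δ|) := by
    rw [abs_mul, ← cos_abs (π * δ), abs_mul, abs_of_pos hpi, abs_of_nonneg hcos]
  have hmono : π * |δ| * cos (π * |δ|) ≤ π * α * cos (π * α) :=
    monotoneOn_mul_cos ⟨by positivity, by nlinarith⟩
      ⟨mul_nonneg hpi.le ((abs_nonneg δ).trans hδ), by nlinarith⟩ (by gcongr)
  rw [habs]
  rw [mul_assoc, mul_assoc] at hmono
  exact le_of_mul_le_mul_left hmono hpi

theorem abs_cosCoeff_zero_sub_le {δ α : ℝ} (hδ : |δ| ≤ α) (hα : α ≤ 1 / 2) (n : ℤ) :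
    |cosCoeff 0 n - cosCoeff δ n| ≤ (-1) ^ n * (cosCoeff 0 n - cosCoeff α n) := by
  have hδ0 := abs_nonneg δ
  have hpi := pi_pos
  rcases eq_or_ne n 0 with rfl | hn
  · have hanti : sinc (π * α) ≤ sinc (π * |δ|) :=
      antitoneOn_sinc ⟨by positivity, by nlinarith⟩
        ⟨mul_nonneg hpi.le (hδ0.trans hδ), by nlinarith⟩ (by gcongr)
    have heven : sinc (π * |δ|) = sinc (π * δ) := by
      rcases abs_choice δ with h | h <;> rw [h]
      rw [mul_neg, sinc_neg]
    rw [cosCoeff_zero_right, cosCoeff_zero_right, cosCoeff_zero_right, mul_zero, sinc_zero,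
      zpow_zero, one_mul, abs_of_nonneg (sub_nonneg.2 (sinc_le_one _)), ← heven]
    exact sub_le_sub_left hanti 1
  · have hn2 : (1 : ℝ) ≤ (n : ℝ) ^ 2 := by
      exact_mod_cast Int.add_one_le_of_lt (sq_pos_of_ne_zero hn)
    have hα2 : α ^ 2 < (n : ℝ) ^ 2 := by nlinarith
    have hδ2 : δ ^ 2 < (n : ℝ) ^ 2 := (sq_le_sq.2 (hδ.trans (le_abs_self α))).trans_lt hα2
    have hzero : (0 : ℝ) ^ 2 < (n : ℝ) ^ 2 := by linarith
    have h0 : cosCoeff 0 n = 0 := by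
      rw [cosCoeff_eq hzero.ne, zero_mul, zero_div, mul_zero, neg_zero]
    rw [h0, cosCoeff_eq hδ2.ne, cosCoeff_eq hα2.ne, zero_sub, zero_sub, neg_neg, neg_neg, abs_mul,
      abs_zpow, abs_neg, abs_one, one_zpow, one_mul, ← mul_assoc, ← mul_zpow, neg_mul_neg, mul_one,
      one_zpow, one_mul]
    exact abs_div_sq_sub_sq_le (abs_mul_sin_pi_mul_le hδ hα) hδ hα2

theorem abs_sinCoeff_le {δ α : ℝ} (hδ : |δ| ≤ α) (hα : α ≤ 1 / 4) (n : ℤ) :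
    |sinCoeff δ n| ≤ -((-1) ^ n * sinCoeff α n) := by
  have hν : (1 / 4 : ℝ) ≤ ((n : ℝ) - 1 / 2) ^ 2 := by
    have h : (0 : ℝ) ≤ (n : ℝ) * (n - 1) := by
      exact_mod_cast (by rcases le_or_gt n 0 with h | h <;> nlinarith : 0 ≤ n * (n - 1))
    linarith
  have hα2 : α ^ 2 < ((n : ℝ) - 1 / 2) ^ 2 := by nlinarith [abs_nonneg δ]
  have hδ2 : δ ^ 2 < ((n : ℝ) - 1 / 2) ^ 2 :=
    (sq_le_sq.2 (hδ.trans (le_abs_self α))).trans_lt hα2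
  rw [sinCoeff_eq hδ2.ne, sinCoeff_eq hα2.ne, mul_neg, neg_neg, abs_neg, abs_mul, abs_zpow, abs_neg,
    abs_one, one_zpow, one_mul, ← mul_assoc, ← mul_zpow, neg_mul_neg, mul_one, one_zpow, one_mul]
  exact abs_div_sq_sub_sq_le (abs_mul_cos_pi_mul_le hδ hα) hδ hα2

theorem norm_exp_I_mul_ofReal_mul_ofReal (ν t : ℝ) : ‖Complex.exp (Complex.I * ν * t)‖ = 1 := by
  rw [mul_assoc, ← Complex.ofReal_mul, Complex.norm_exp_I_mul_ofReal]

section KadecMultiplier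

open Matrix
open scoped Matrix.Norms.L2Operator

variable {m n : Type*} [Fintype m] [Fintype n] [DecidableEq n]

theorem l2_opNorm_hadamard_one_sub_cos_le (F : Matrix m n ℂ) {t : m → ℝ} {δ : n → ℝ} {α : ℝ}
    (ht : ∀ i, t i ∈ Set.Icc (-π) π) (hδ : ∀ j, |δ j| ≤ α) (hα0 : 0 ≤ α) (hα : α ≤ 1 / 2) :
    ‖F ⊙ of fun i j => (1 - cos (δ j * t i) : ℂ)‖ ≤ (1 - cos (π * α)) * ‖F‖ := by
  refine l2_opNorm_hadamard_le (f := fun (k : ℤ) i => Complex.exp (Complex.I * k * t i))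
    (g := fun k j => (cosCoeff 0 k - cosCoeff (δ j) k : ℝ))
    (fun i j => hasSum_one_sub_cos (δ j) (ht i)) (fun k => ?_) (fun k => ?_)
    (hasSum_alternating_one_sub_cos α)
  · refine (pi_norm_le_iff_of_nonneg zero_le_one).2 fun i => ?_
    exact_mod_cast (norm_exp_I_mul_ofReal_mul_ofReal k (t i)).le
  · have hnonneg := (abs_nonneg _).trans (abs_cosCoeff_zero_sub_le (abs_of_nonneg hα0).le hα k)
    refine (pi_norm_le_iff_of_nonneg hnonneg).2 fun j => ?_
    rw [Complex.norm_real]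
    exact abs_cosCoeff_zero_sub_le (hδ j) hα k

theorem l2_opNorm_hadamard_sin_le (F : Matrix m n ℂ) {t : m → ℝ} {δ : n → ℝ} {α : ℝ}
    (ht : ∀ i, t i ∈ Set.Icc (-π) π) (hδ : ∀ j, |δ j| ≤ α) (hα0 : 0 ≤ α) (hα : α ≤ 1 / 4) :
    ‖F ⊙ of fun i j => (Complex.I * sin (δ j * t i) : ℂ)‖ ≤ sin (π * α) * ‖F‖ := by
  refine l2_opNorm_hadamard_le
    (f := fun (k : ℤ) i => Complex.exp (Complex.I * (k - 1 / 2 : ℝ) * t i))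
    (g := fun k j => (sinCoeff (δ j) k : ℂ))
    (fun i j => hasSum_sinCoeff (δ j) (ht i)) (fun k => ?_) (fun k => ?_)
    (hasSum_alternating_sinCoeff α)
  · exact (pi_norm_le_iff_of_nonneg zero_le_one).2 fun i =>
      (norm_exp_I_mul_ofReal_mul_ofReal _ (t i)).le
  · have hnonneg := (abs_nonneg _).trans (abs_sinCoeff_le (abs_of_nonneg hα0).le hα k)
    refine (pi_norm_le_iff_of_nonneg hnonneg).2 fun j => ?_
    rw [Complex.norm_real]
    exact abs_sinCoeff_le (hδ j) hα k

theorem l2_opNorm_hadamard_one_sub_exp_le (F : Matrix m n ℂ) {t : m → ℝ} {δ : n → ℝ} {α : ℝ}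
    (ht : ∀ i, t i ∈ Set.Icc (-π) π) (hδ : ∀ j, |δ j| ≤ α) (hα0 : 0 ≤ α) (hα : α ≤ 1 / 4) :
    ‖F ⊙ of fun i j => 1 - Complex.exp (Complex.I * δ j * t i)‖ ≤
      (1 - cos (π * α) + sin (π * α)) * ‖F‖ := by
  have hsplit : (F ⊙ of fun i j => 1 - Complex.exp (Complex.I * δ j * t i)) =
      (F ⊙ of fun i j => (1 - cos (δ j * t i) : ℂ)) -
        F ⊙ of fun i j => (Complex.I * sin (δ j * t i) : ℂ) := by
    ext i j
    have heuler : Complex.exp (Complex.I * δ j * t i) =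
        cos (δ j * t i) + Complex.I * sin (δ j * t i) := by
      rw [mul_assoc, mul_comm, Complex.exp_mul_I, mul_comm Complex.I]
      push_cast
      rfl
    simp only [hadamard_apply, of_apply, Matrix.sub_apply, heuler]
    ring
  rw [hsplit, add_mul]
  exact (norm_sub_le _ _).trans (add_le_add
    (l2_opNorm_hadamard_one_sub_cos_le F ht hδ hα0 (by linarith))
    (l2_opNorm_hadamard_sin_le F ht hδ hα0 hα))

end KadecMultiplier

section Nodes

open Matrix
open scoped Matrix.Norms.L2Operator

/-- The spacing `h` of the unperturbed nodes. -/
noncomputable def gridStep (N : ℕ) : ℝ := 2 * π / (2 * N + 1)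

/-- The matrix of values `exp (i k x_j)` of the Fourier modes (rows) at the nodes (columns), both
indexed by `{-N, …, N}`. -/
noncomputable def fourierMatrix (N : ℕ) (x : ℤ → ℝ) :
    Matrix (Icc (-(N : ℤ)) (N : ℤ)) (Icc (-(N : ℤ)) (N : ℤ)) ℂ :=
  of fun k j => Complex.exp (Complex.I * (k : ℤ) * x j)

theorem gridStep_pos (N : ℕ) : 0 < gridStep N := by
  unfold gridStep
  positivity

theorem sum_exp_I_mul_gridStep_eq_zero {N : ℕ} {l : ℤ} (hl : ¬(2 * N + 1 : ℤ) ∣ l) :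
    ∑ k ∈ Icc (-(N : ℤ)) (N : ℤ), Complex.exp (Complex.I * k * (l * gridStep N : ℝ)) = 0 := by
  set ζ := Complex.exp (2 * π * Complex.I / ((2 * N + 1 : ℕ) : ℂ)) with hζ
  have hprim : IsPrimitiveRoot ζ (2 * N + 1) := Complex.isPrimitiveRoot_exp _ (by lia)
  have hne_one : ζ ^ l ≠ 1 := by
    rw [Ne, hprim.zpow_eq_one_iff_dvd]
    exact_mod_cast hl
  have hpow_one : (ζ ^ l) ^ (2 * N + 1) = 1 := by
    rw [← zpow_natCast, zpow_comm, zpow_natCast, hprim.pow_eq_one, _root_.one_zpow]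
  rw [← sum_zpow_Icc_neg_eq_zero hne_one hpow_one]
  refine sum_congr rfl fun k _ => ?_
  rw [hζ, ← Complex.exp_int_mul, ← Complex.exp_int_mul, gridStep]
  push_cast
  ring_nf

theorem zero_mem_Icc_neg_natCast (N : ℕ) : (0 : ℤ) ∈ Icc (-(N : ℤ)) (N : ℤ) :=
  mem_Icc.2 ⟨by lia, by lia⟩

theorem card_Icc_neg_natCast (N : ℕ) : #(Icc (-(N : ℤ)) (N : ℤ)) = 2 * N + 1 := by
  rw [Int.card_Icc]
  lia

theorem conjTranspose_fourierMatrix_mul_self_grid (N : ℕ) :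
    (fourierMatrix N fun j => j * gridStep N)ᴴ * fourierMatrix N (fun j => j * gridStep N) =
      ((2 * N + 1 : ℝ) : ℂ) • 1 := by
  ext i j
  have hentry : ((fourierMatrix N fun j => j * gridStep N)ᴴ *
      fourierMatrix N (fun j => j * gridStep N)) i j =
        ∑ k ∈ Icc (-(N : ℤ)) (N : ℤ),
          Complex.exp (Complex.I * k * ((j - i : ℤ) * gridStep N : ℝ)) := by
    rw [mul_apply, ← sum_coe_sort (Icc (-(N : ℤ)) (N : ℤ))]
    refine sum_congr rfl fun k _ => ?_
    rw [conjTranspose_apply, fourierMatrix, of_apply, of_apply, Complex.star_def,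
      ← Complex.exp_conj, ← Complex.exp_add]
    simp only [map_mul, Complex.conj_I, Complex.conj_ofReal, map_intCast]
    push_cast
    ring_nf
  rw [hentry, Matrix.smul_apply, one_apply, smul_eq_mul]
  split_ifs with hij
  · simp only [hij, sub_self, Int.cast_zero, zero_mul, Complex.ofReal_zero, mul_zero,
      Complex.exp_zero, sum_const, card_Icc_neg_natCast, nsmul_eq_mul, mul_one]
    push_cast
    rfl
  · rw [mul_zero]
    have hi := mem_Icc.1 i.2
    have hj := mem_Icc.1 j.2
    refine sum_exp_I_mul_gridStep_eq_zero fun hdvd => ?_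
    have := Int.eq_zero_of_abs_lt_dvd hdvd (abs_lt.2 ⟨by lia, by lia⟩)
    exact hij (Subtype.ext (by lia))

theorem l2_opNorm_fourierMatrix_grid (N : ℕ) :
    ‖fourierMatrix N fun j => j * gridStep N‖ = √(2 * N + 1) := by
  have : Nonempty (Icc (-(N : ℤ)) (N : ℤ)) := ⟨0, zero_mem_Icc_neg_natCast N⟩
  exact l2_opNorm_of_conjTranspose_mul_self (by positivity)
    (conjTranspose_fourierMatrix_mul_self_grid N)

theorem fourierMatrix_grid_sub_eq_hadamard (N : ℕ) (x : ℤ → ℝ) :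
    fourierMatrix N (fun j => j * gridStep N) - fourierMatrix N x =
      fourierMatrix N (fun j => j * gridStep N) ⊙ of fun k j => 1 - Complex.exp
        (Complex.I * (x j / gridStep N - (j : ℤ) : ℝ) * ((k : ℤ) * gridStep N : ℝ)) := by
  ext k j
  have hstep : (gridStep N : ℂ) ≠ 0 := by exact_mod_cast (gridStep_pos N).ne'
  simp only [Matrix.sub_apply, hadamard_apply, fourierMatrix, of_apply, mul_sub, mul_one,
    ← Complex.exp_add]
  congr 2
  push_cast
  field_simp
  ring

variable {N : ℕ} {α : ℝ} {x w : ℤ → ℝ}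

theorem abs_div_gridStep_sub_le (hx : PerturbedNodes N α x) {j : ℤ}
    (hj : j ∈ Icc (-(N : ℤ)) (N : ℤ)) : |x j / gridStep N - j| ≤ α := by
  have hstep := gridStep_pos N
  rw [div_sub' hstep.ne', abs_div, abs_of_pos hstep, div_le_iff₀ hstep, mul_comm (gridStep N)]
  exact hx j hj

theorem int_mul_gridStep_mem_Icc {k : ℤ} (hk : k ∈ Icc (-(N : ℤ)) (N : ℤ)) :
    k * gridStep N ∈ Set.Icc (-π) π := by
  have hstep : (2 * N + 1) * gridStep N = 2 * π := mul_div_cancel₀ _ (by positivity)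
  obtain ⟨hl, hu⟩ := mem_Icc.1 hk
  have hl' : (-N : ℝ) ≤ k := by exact_mod_cast hl
  have hu' : (k : ℝ) ≤ N := by exact_mod_cast hu
  have := gridStep_pos N
  constructor <;> nlinarith

theorem l2_opNorm_fourierMatrix_grid_sub_le (hx : PerturbedNodes N α x) (hα0 : 0 ≤ α)
    (hα : α ≤ 1 / 4) :
    ‖fourierMatrix N (fun j => j * gridStep N) - fourierMatrix N x‖ ≤
      (1 - cos (π * α) + sin (π * α)) * √(2 * N + 1) := by
  rw [fourierMatrix_grid_sub_eq_hadamard, ← l2_opNorm_fourierMatrix_grid]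
  exact l2_opNorm_hadamard_one_sub_exp_le _ (fun k => int_mul_gridStep_mem_Icc k.2)
    (fun j => abs_div_gridStep_sub_le hx j.2) hα0 hα

theorem le_norm_fourierMatrix_mulVec (hx : PerturbedNodes N α x) (hα0 : 0 ≤ α) (hα : α ≤ 1 / 4)
    (u : Icc (-(N : ℤ)) (N : ℤ) → ℂ) :
    (cos (π * α) - sin (π * α)) * √(2 * N + 1) * ‖WithLp.toLp 2 u‖ ≤
      ‖WithLp.toLp 2 (fourierMatrix N x *ᵥ u)‖ := by
  set F := fourierMatrix N fun j => j * gridStep N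
  have hgrid : ‖WithLp.toLp 2 (F *ᵥ u)‖ = √(2 * N + 1) * ‖WithLp.toLp 2 u‖ :=
    norm_toLp_mulVec_of_conjTranspose_mul_self (c := 2 * N + 1) (by positivity)
      (conjTranspose_fourierMatrix_mul_self_grid N) u
  have hdiff : ‖WithLp.toLp 2 (F *ᵥ u) - WithLp.toLp 2 (fourierMatrix N x *ᵥ u)‖ ≤
      (1 - cos (π * α) + sin (π * α)) * √(2 * N + 1) * ‖WithLp.toLp 2 u‖ := by
    rw [← WithLp.toLp_sub, ← sub_mulVec]
    refine (l2_opNorm_mulVec _ (WithLp.toLp 2 u)).trans ?_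
    gcongr
    exact l2_opNorm_fourierMatrix_grid_sub_le hx hα0 hα
  have htri := norm_sub_norm_le (WithLp.toLp 2 (F *ᵥ u)) (WithLp.toLp 2 (fourierMatrix N x *ᵥ u))
  rw [hgrid] at htri
  linarith

theorem isTrigPoly_exp_I_mul {k : ℤ} (hk : k ∈ Icc (-(N : ℤ)) (N : ℤ)) :
    IsTrigPoly N fun t => Complex.exp (Complex.I * k * t) := by
  refine ⟨Pi.single k 1, fun t => ?_⟩
  simp only [Pi.single_apply, ite_mul, one_mul, zero_mul, sum_ite_eq', hk, if_true]

theorem integral_exp_I_int_mul (k : ℤ) :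
    ∫ t in (-π)..π, Complex.exp (Complex.I * k * t) = if k = 0 then 2 * (π : ℂ) else 0 := by
  have h := integral_exp_I_mul k
  rw [Complex.ofReal_intCast] at h
  rw [h]
  split_ifs with hk
  · simp [hk]
  · rw [sinc_of_ne_zero (mul_ne_zero pi_ne_zero (Int.cast_ne_zero.2 hk)), mul_comm π,
      sin_int_mul_pi, zero_div, Complex.ofReal_zero, mul_zero]

theorem ExactQuad.fourierMatrix_mulVec (hw : ExactQuad N x w) :
    (fourierMatrix N x *ᵥ fun j => (w j : ℂ)) =
      Pi.single ⟨0, zero_mem_Icc_neg_natCast N⟩ (2 * π : ℂ) := by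
  ext k
  have hexact := hw _ (isTrigPoly_exp_I_mul k.2)
  rw [integral_exp_I_int_mul] at hexact
  simp only [Pi.single_apply, Subtype.ext_iff]
  rw [← hexact, ← sum_coe_sort (Icc (-(N : ℤ)) (N : ℤ)), mulVec_eq_sum]
  simp [fourierMatrix]

theorem ExactQuad.norm_fourierMatrix_mulVec (hw : ExactQuad N x w) :
    ‖WithLp.toLp 2 (fourierMatrix N x *ᵥ fun j => (w j : ℂ))‖ = 2 * π := by
  rw [hw.fourierMatrix_mulVec]
  refine (PiLp.norm_single 2 (fun _ => ℂ) _ _).trans ?_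
  rw [norm_mul, Complex.norm_ofNat, Complex.norm_of_nonneg pi_pos.le]

end Nodes

theorem cos_sub_sin_pi_mul_pos {α : ℝ} (hα0 : 0 ≤ α) (hα : α < 1 / 4) :
    0 < cos (π * α) - sin (π * α) := by
  have hpi := pi_pos
  rw [sub_pos, ← cos_pi_div_two_sub]
  exact cos_lt_cos_of_nonneg_of_le_pi (by positivity) (by nlinarith) (by nlinarith)

/-- bound on the absolute sum of quadrature weights at α-perturbed nodes
for α < 1/4. -/
theorem abs_sum_weights_bounded (α : ℝ) (hα0 : 0 ≤ α) (hα : α < 1/4) (N : ℕ) (hN : 0 < N)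
    (x : ℤ → ℝ) (hx : PerturbedNodes N α x)
    (w : ℤ → ℝ) (hw : ExactQuad N x w) :
    ∑ j ∈ Finset.Icc (-(N:ℤ)) (N:ℤ), |w j| ≤
      2*π / (Real.cos (π*α) - Real.sin (π*α)) := by
  have hpos := cos_sub_sin_pi_mul_pos hα0 hα
  set u : Icc (-(N : ℤ)) (N : ℤ) → ℂ := fun j => w j
  have hcauchy : ∑ j ∈ Icc (-(N : ℤ)) (N : ℤ), |w j| ≤ √(2 * N + 1) * ‖WithLp.toLp 2 u‖ := by
    have h := sum_norm_le_sqrt_card_mul_norm_toLp u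
    rw [Fintype.card_coe, card_Icc_neg_natCast] at h
    simp only [u, Complex.norm_real, norm_eq_abs, sum_coe_sort _ fun j => |w j|] at h
    exact_mod_cast h
  rw [le_div_iff₀' hpos]
  calc (cos (π * α) - sin (π * α)) * ∑ j ∈ Icc (-(N : ℤ)) (N : ℤ), |w j|
      ≤ (cos (π * α) - sin (π * α)) * (√(2 * N + 1) * ‖WithLp.toLp 2 u‖) := by gcongr
    _ = (cos (π * α) - sin (π * α)) * √(2 * N + 1) * ‖WithLp.toLp 2 u‖ := (mul_assoc _ _ _).symm
    _ ≤ ‖WithLp.toLp 2 ((fourierMatrix N x).mulVec u)‖ :=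
        le_norm_fourierMatrix_mulVec hx hα0 hα.le u
    _ = 2 * π := hw.norm_fourierMatrix_mulVec
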